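/- arXiv:2304.14990 — 5 statements merged into one kernel-verified Lean document; each statement's English description precedes it below -/
import Mathlib

section
/- Let (u_l, u_f) be a finite Stackelberg game with utilities in [0,1], n ≥ 2 follower actions, and inducibility gap Δ > 0. Then the δ-RSE leader utility converges to the SSE leader utility as δ → 0^+: lim_{δ → 0^+} u_RSE(δ) = u_SSE. -/
open Finset Set

noncomputable section

/-- The simplex of mixed strategies over `m` actions. -/
def simplex (m : ℕ) : Set (Fin m → ℝ) := stdSimplex ℝ (Fin m)

/-- Mixed-strategy extension of a utility matrix: `u(x, j) = ∑ i, x i * u i j`. -/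
def mixU {m n : ℕ} (u : Fin m → Fin n → ℝ) (x : Fin m → ℝ) (j : Fin n) : ℝ :=
  ∑ i, x i * u i j

/-- The follower's δ-optimal response set (strict inequality):
`BR_δ(x) = {j : u_f(x,j) > max_{j'} u_f(x,j') - δ}`. -/
def BRd {m n : ℕ} (uf : Fin m → Fin n → ℝ) (δ : ℝ) (x : Fin m → ℝ) : Set (Fin n) :=
  {j | mixU uf x j > (⨆ j', mixU uf x j') - δ}

/-- The follower's exact best-response set. -/
def BR0 {m n : ℕ} (uf : Fin m → Fin n → ℝ) (x : Fin m → ℝ) : Set (Fin n) :=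
  {j | mixU uf x j = ⨆ j', mixU uf x j'}

/-- Worst-case leader utility over the follower's δ-optimal response set:
`min_{j ∈ BR_δ(x)} u_l(x, j)`. -/
def valBR {m n : ℕ} (ul uf : Fin m → Fin n → ℝ) (δ : ℝ) (x : Fin m → ℝ) : ℝ :=
  sInf (mixU ul x '' BRd uf δ x)

/-- The δ-RSE leader utility `u_RSE(δ) = sup_{x ∈ Δ^m} min_{j ∈ BR_δ(x)} u_l(x, j)`. -/
def uRSE {m n : ℕ} (ul uf : Fin m → Fin n → ℝ) (δ : ℝ) : ℝ :=
  sSup (valBR ul uf δ '' simplex m)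

/-- The SSE leader utility `u_SSE = sup_{x ∈ Δ^m} max_{j ∈ BR_0(x)} u_l(x, j)`. -/
def uSSE {m n : ℕ} (ul uf : Fin m → Fin n → ℝ) : ℝ :=
  sSup ((fun x => sSup (mixU ul x '' BR0 uf x)) '' simplex m)

/-- The maximin leader utility `u_MM = sup_{x ∈ Δ^m} min_{j ∈ [n]} u_l(x, j)`. -/
def uMM {m n : ℕ} (ul : Fin m → Fin n → ℝ) : ℝ :=
  sSup ((fun x => ⨅ j, mixU ul x j) '' simplex m)

/-- The inducibility gap
`Δ = min_{j} sup_{x ∈ Δ^m} min_{j' ≠ j} (u_f(x, j) - u_f(x, j'))`. -/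
def indGap {m n : ℕ} (uf : Fin m → Fin n → ℝ) : ℝ :=
  ⨅ j, sSup ((fun x => ⨅ j' : {k : Fin n // k ≠ j}, (mixU uf x j - mixU uf x j'.1)) '' simplex m)

theorem mixU_mem {m n : ℕ} (u : Fin m → Fin n → ℝ) (hu : ∀ i j, u i j ∈ Set.Icc (0:ℝ) 1)
    {x : Fin m → ℝ} (hx : x ∈ simplex m) (j : Fin n) : mixU u x j ∈ Set.Icc (0:ℝ) 1 := by
  obtain ⟨h0, h1⟩ := hx
  constructor
  · exact Finset.sum_nonneg fun i _ => mul_nonneg (h0 i) (hu i j).1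
  · rw [← h1]
    exact Finset.sum_le_sum fun i _ => mul_le_of_le_one_right (h0 i) (hu i j).2

theorem mixU_comb {m n : ℕ} (u : Fin m → Fin n → ℝ) (x y : Fin m → ℝ) (s t : ℝ) (j : Fin n) :
    mixU u (s • x + t • y) j = s * mixU u x j + t * mixU u y j := by
  simp only [mixU, Finset.mul_sum, ← Finset.sum_add_distrib]
  refine Finset.sum_congr rfl fun i _ => ?_
  simp only [Pi.add_apply, Pi.smul_apply, smul_eq_mul]
  ring

theorem BR0_nonempty {m n : ℕ} (hn : 2 ≤ n) (uf : Fin m → Fin n → ℝ) (x : Fin m → ℝ) :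
    (BR0 uf x).Nonempty := by
  haveI : Nonempty (Fin n) := ⟨⟨0, by omega⟩⟩
  exact exists_eq_ciSup_of_finite (f := mixU uf x)

theorem gap_witness {m n : ℕ} (uf : Fin m → Fin n → ℝ) (hΔ : 0 < indGap uf) (j : Fin n) :
    ∃ y ∈ simplex m, ∃ g : ℝ, 0 < g ∧ ∀ k, k ≠ j → mixU uf y k + g ≤ mixU uf y j := by
  have h := lt_of_lt_of_le hΔ (ciInf_le (Set.finite_range _).bddBelow j)
  have hne : ((fun x => ⨅ j' : {k : Fin n // k ≠ j}, (mixU uf x j - mixU uf x j'.1)) ''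
      simplex m).Nonempty := by
    by_contra hc
    rw [Set.not_nonempty_iff_eq_empty] at hc
    rw [hc, Real.sSup_empty] at h
    exact lt_irrefl _ h
  obtain ⟨_, ⟨y, hy, rfl⟩, hpos⟩ := exists_lt_of_lt_csSup hne h
  refine ⟨y, hy, _, hpos, fun k hk => ?_⟩
  have := ciInf_le (f := fun j' : {k : Fin n // k ≠ j} => mixU uf y j - mixU uf y j'.1)
    (Set.finite_range _).bddBelow ⟨k, hk⟩
  simp only at this ⊢
  linarith

/-- `u_RSE(δ) → u_SSE` as `δ → 0⁺` when the inducibility gap is positive. -/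
theorem uRSE_tendsto_uSSE (m n : ℕ) (hn : 2 ≤ n) (ul uf : Fin m → Fin n → ℝ)
    (hul : ∀ i j, ul i j ∈ Set.Icc (0:ℝ) 1) (huf : ∀ i j, uf i j ∈ Set.Icc (0:ℝ) 1)
    (hΔ : 0 < indGap uf) :
    Filter.Tendsto (uRSE ul uf) (nhdsWithin 0 (Set.Ioi 0)) (nhds (uSSE ul uf)) := by
  haveI : Nonempty (Fin n) := ⟨⟨0, by omega⟩⟩
  obtain ⟨x₀, hx₀, -⟩ := gap_witness uf hΔ ⟨0, by omega⟩
  have fin : ∀ (x : Fin m → ℝ) (S : Set (Fin n)), (mixU ul x '' S).Finite :=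
    fun x S => (Set.toFinite S).image _
  have brsub : ∀ δ > 0, ∀ x, BR0 uf x ⊆ BRd uf δ x := by
    intro δ hδ x j hj
    have hj : mixU uf x j = ⨆ j', mixU uf x j' := hj
    change mixU uf x j > (⨆ j', mixU uf x j') - δ
    linarith
  have hS : BddAbove ((fun x => sSup (mixU ul x '' BR0 uf x)) '' simplex m) := by
    refine ⟨1, ?_⟩
    rintro _ ⟨x, hx, rfl⟩
    refine csSup_le ((BR0_nonempty hn uf x).image _) ?_
    rintro _ ⟨j, -, rfl⟩
    exact (mixU_mem ul hul hx j).2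
  have key : ∀ δ > 0, ∀ x ∈ simplex m, valBR ul uf δ x ≤ uSSE ul uf := by
    intro δ hδ x hx
    obtain ⟨j, hj⟩ := BR0_nonempty hn uf x
    calc valBR ul uf δ x ≤ mixU ul x j :=
          csInf_le (fin x _).bddBelow ⟨j, brsub δ hδ x hj, rfl⟩
      _ ≤ sSup (mixU ul x '' BR0 uf x) := le_csSup (fin x _).bddAbove ⟨j, hj, rfl⟩
      _ ≤ uSSE ul uf := le_csSup hS ⟨x, hx, rfl⟩
  have upper : ∀ δ > 0, uRSE ul uf δ ≤ uSSE ul uf := by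
    intro δ hδ
    refine csSup_le (Set.Nonempty.image _ ⟨x₀, hx₀⟩) ?_
    rintro _ ⟨x, hx, rfl⟩
    exact key δ hδ x hx
  have lower : ∀ t : ℝ, 0 < t → t ≤ 1 → ∃ d > 0, ∀ δ > 0, δ ≤ d →
      uSSE ul uf - 2 * t < uRSE ul uf δ := by
    intro t ht ht1
    obtain ⟨_, ⟨x, hx, rfl⟩, h1⟩ := exists_lt_of_lt_csSup
      (Set.Nonempty.image (fun x => sSup (mixU ul x '' BR0 uf x)) ⟨x₀, hx₀⟩)
      (show uSSE ul uf - t < sSup _ from sub_lt_self _ ht)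
    obtain ⟨_, ⟨j, hj, rfl⟩, h2⟩ := exists_lt_of_lt_csSup ((BR0_nonempty hn uf x).image _) h1
    obtain ⟨y, hy, g, hg, hgap⟩ := gap_witness uf hΔ j
    refine ⟨t * g, mul_pos ht hg, fun δ hδ hδd => ?_⟩
    have hz : (1 - t) • x + t • y ∈ simplex m :=
      convex_stdSimplex ℝ (Fin m) hx hy (by linarith) ht.le (by ring)
    have hjmax : ∀ k, mixU uf x k ≤ mixU uf x j := by
      intro k
      have hj : mixU uf x j = ⨆ j', mixU uf x j' := hj
      rw [hj]
      exact le_ciSup (Set.finite_range _).bddAbove k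
    have honly : ∀ k ∈ BRd uf δ ((1 - t) • x + t • y), k = j := by
      intro k hk
      by_contra hne
      have hk : mixU uf ((1 - t) • x + t • y) k >
        (⨆ j', mixU uf ((1 - t) • x + t • y) j') - δ := hk
      have h3 := le_ciSup (f := mixU uf ((1 - t) • x + t • y)) (Set.finite_range _).bddAbove j
      rw [mixU_comb] at h3 hk
      have h4 := mul_le_mul_of_nonneg_left (hgap k hne) ht.le
      have h5 := mul_le_mul_of_nonneg_left (hjmax k) (sub_nonneg.2 ht1)
      linarith
    have hval : (1 - t) * mixU ul x j + t * mixU ul y j ≤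
        valBR ul uf δ ((1 - t) • x + t • y) := by
      refine le_csInf (((BR0_nonempty hn uf _).mono (brsub δ hδ _)).image _) ?_
      rintro _ ⟨k, hk, rfl⟩
      rw [honly k hk, mixU_comb]
    have hle : valBR ul uf δ ((1 - t) • x + t • y) ≤ uRSE ul uf δ := by
      refine le_csSup ⟨uSSE ul uf, ?_⟩ ⟨_, hz, rfl⟩
      rintro _ ⟨w, hw, rfl⟩
      exact key δ hδ w hw
    have h6 := mul_le_of_le_one_right ht.le (mixU_mem ul hul hx j).2
    have h7 := mul_nonneg ht.le (mixU_mem ul hul hy j).1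
    linarith
  rw [Metric.tendsto_nhdsWithin_nhds]
  intro ε hε
  obtain ⟨d, hd, H⟩ := lower (min (ε / 2) 1) (by positivity) (min_le_right _ _)
  refine ⟨d, hd, fun {δ} hδ hdist => ?_⟩
  have hδ : 0 < δ := hδ
  rw [Real.dist_eq, sub_zero, abs_of_pos hδ] at hdist
  have h1 := H δ hδ hdist.le
  have h2 := upper δ hδ
  have h3 := min_le_left (ε / 2) 1
  rw [Real.dist_eq, abs_lt]
  constructor <;> linarith
end
end

section
/- Let (u_l, u_f) be a finite Stackelberg game with utilities in [0,1], n ≥ 2 follower actions, and inducibility gap Δ > 0, and let 0 < δ < Δ. Then there exists a leader strategy x̂ ∈ Δ^m such that min_{j ∈ BR_δ(x̂)} u_l(x̂, j) ≥ (1 − δ/Δ)·u_SSE; consequently min_{j ∈ BR_δ(x̂)} u_l(x̂, j) ≥ u_RSE(δ) − δ/Δ, i.e., x̂ is a (δ/Δ)-optimal δ-RSE leader strategy. (The paper's construction takes x̂ = (1 − δ/Δ)·x* + (δ/Δ)·x^{j*}, where (x*, j*) is an SSE and x^{j*} induces j* with margin Δ; this x̂ satisfies BR_δ(x̂) = {j*}.)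 -/
open Finset Set

noncomputable section

theorem mixU_nonneg_aux {m n : ℕ} (u : Fin m → Fin n → ℝ)
    (hu : ∀ i j, u i j ∈ Set.Icc (0:ℝ) 1) (x : Fin m → ℝ) (hx : x ∈ simplex m) (j : Fin n) :
    0 ≤ mixU u x j :=
  Finset.sum_nonneg fun i _ => mul_nonneg (hx.1 i) (hu i j).1

theorem mixU_le_one_aux {m n : ℕ} (u : Fin m → Fin n → ℝ)
    (hu : ∀ i j, u i j ∈ Set.Icc (0:ℝ) 1) (x : Fin m → ℝ) (hx : x ∈ simplex m) (j : Fin n) :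
    mixU u x j ≤ 1 := by
  rw [← hx.2]
  exact Finset.sum_le_sum fun i _ => mul_le_of_le_one_right (hx.1 i) (hu i j).2

theorem mixU_continuous_aux {m n : ℕ} (u : Fin m → Fin n → ℝ) (j : Fin n) :
    Continuous fun x => mixU u x j := by
  unfold mixU
  fun_prop

theorem mixU_comb_aux {m n : ℕ} (u : Fin m → Fin n → ℝ) (x y : Fin m → ℝ) (a b : ℝ) (j : Fin n) :
    mixU u (a • x + b • y) j = a * mixU u x j + b * mixU u y j := by
  simp only [mixU, Finset.mul_sum, ← Finset.sum_add_distrib]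
  refine Finset.sum_congr rfl fun i _ => ?_
  simp only [Pi.add_apply, Pi.smul_apply, smul_eq_mul]
  ring

theorem simplex_nonempty_aux {m n : ℕ} (uf : Fin m → Fin n → ℝ) (hΔ : 0 < indGap uf) :
    (simplex m).Nonempty := by
  by_contra h
  rw [Set.not_nonempty_iff_eq_empty] at h
  simp [indGap, h] at hΔ

theorem induce_aux {m n : ℕ} (hn : 2 ≤ n) (uf : Fin m → Fin n → ℝ) (hΔ : 0 < indGap uf)
    (j : Fin n) :
    ∃ y ∈ simplex m, ∀ k, k ≠ j → indGap uf ≤ mixU uf y j - mixU uf y k := by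
  have hne := simplex_nonempty_aux uf hΔ
  have : Nontrivial (Fin n) := Fin.nontrivial_iff_two_le.2 hn
  obtain ⟨k0, hk0⟩ := exists_ne j
  have : Nonempty {k : Fin n // k ≠ j} := ⟨⟨k0, hk0⟩⟩
  have hc : Continuous (fun x : Fin m → ℝ =>
      ⨅ j' : {k : Fin n // k ≠ j}, (mixU uf x j - mixU uf x j'.1)) := by
    simp only [← Finset.inf'_univ_eq_ciInf]
    refine Continuous.finset_inf'_apply _ fun i _ => ?_
    exact (mixU_continuous_aux uf j).sub (mixU_continuous_aux uf i.1)
  have hcomp : IsCompact (simplex m) := isCompact_stdSimplex ℝ (Fin m)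
  obtain ⟨y, hy, hyeq⟩ := hcomp.exists_sSup_image_eq hne hc.continuousOn
  refine ⟨y, hy, fun k hk => ?_⟩
  have h1 : indGap uf ≤ _ := ciInf_le (Set.finite_range _).bddBelow j
  rw [hyeq] at h1
  exact h1.trans (ciInf_le (Set.finite_range fun j' : {k : Fin n // k ≠ j} =>
    mixU uf y j - mixU uf y j'.1).bddBelow ⟨k, hk⟩)

theorem sse_aux {m n : ℕ} (hn : 2 ≤ n) (ul uf : Fin m → Fin n → ℝ)
    (hne : (simplex m).Nonempty) :
    ∃ x ∈ simplex m, ∃ j, (∀ k, mixU uf x k ≤ mixU uf x j) ∧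
      ∀ y ∈ simplex m, ∀ i, (∀ k, mixU uf y k ≤ mixU uf y i) → mixU ul y i ≤ mixU ul x j := by
  have : Nonempty (Fin n) := ⟨⟨0, by omega⟩⟩
  have hcomp : IsCompact (simplex m) := isCompact_stdSimplex ℝ (Fin m)
  have hcont : ∀ u : Fin m → Fin n → ℝ,
      Continuous fun p : (Fin m → ℝ) × Fin n => mixU u p.1 p.2 := fun u =>
    continuous_prod_of_discrete_right.2 fun j => mixU_continuous_aux u j
  have hcl : IsClosed {p : (Fin m → ℝ) × Fin n | ∀ k, mixU uf p.1 k ≤ mixU uf p.1 p.2} := by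
    simp only [Set.setOf_forall]
    exact isClosed_iInter fun k => isClosed_le
      ((mixU_continuous_aux uf k).comp continuous_fst) (hcont uf)
  have hS := (hcomp.prod (isCompact_univ (X := Fin n))).inter_right hcl
  have hSne : (simplex m ×ˢ (Set.univ : Set (Fin n)) ∩
      {p | ∀ k, mixU uf p.1 k ≤ mixU uf p.1 p.2}).Nonempty := by
    obtain ⟨x, hx⟩ := hne
    obtain ⟨j, hj⟩ := Finite.exists_max (mixU uf x)
    exact ⟨(x, j), ⟨hx, trivial⟩, hj⟩
  obtain ⟨p, hp, hmax⟩ := hS.exists_isMaxOn hSne (hcont ul).continuousOn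
  refine ⟨p.1, hp.1.1, p.2, hp.2, fun y hy i hi => ?_⟩
  exact hmax (show (y, i) ∈ _ from ⟨⟨hy, trivial⟩, hi⟩)

/-- there is a `(δ/Δ)`-optimal δ-RSE leader strategy with value at least
`(1 − δ/Δ)·u_SSE`. -/
theorem approx_rse_strategy (m n : ℕ) (hn : 2 ≤ n) (ul uf : Fin m → Fin n → ℝ)
    (hul : ∀ i j, ul i j ∈ Set.Icc (0:ℝ) 1) (huf : ∀ i j, uf i j ∈ Set.Icc (0:ℝ) 1)
    (hΔ : 0 < indGap uf) (δ : ℝ) (hδ : 0 < δ) (hδΔ : δ < indGap uf) :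
    ∃ x ∈ simplex m,
      (1 - δ / indGap uf) * uSSE ul uf ≤ valBR ul uf δ x ∧
      uRSE ul uf δ - δ / indGap uf ≤ valBR ul uf δ x := by
  have hne := simplex_nonempty_aux uf hΔ
  have hnn : Nonempty (Fin n) := ⟨⟨0, by omega⟩⟩
  obtain ⟨x, hx, j, hj, hmax⟩ := sse_aux hn ul uf hne
  obtain ⟨y, hy, hyj⟩ := induce_aux hn uf hΔ j
  have hsup : ∀ (z : Fin m → ℝ) (k : Fin n), mixU uf z k ≤ ⨆ k', mixU uf z k' := fun z k =>
    le_ciSup (Set.finite_range (mixU uf z)).bddAbove k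
  have hSSE : uSSE ul uf ≤ mixU ul x j := by
    refine csSup_le (hne.image _) ?_
    rintro _ ⟨z, hz, rfl⟩
    obtain ⟨i, hi⟩ := Finite.exists_max (mixU uf z)
    refine csSup_le ⟨_, i, le_antisymm (hsup z i) (ciSup_le hi), rfl⟩ ?_
    rintro _ ⟨k, hk, rfl⟩
    refine hmax z hz k fun k' => ?_
    have hk' : mixU uf z k = ⨆ j', mixU uf z j' := hk
    rw [hk']
    exact hsup z k'
  have hRSE : uRSE ul uf δ ≤ mixU ul x j := by
    refine csSup_le (hne.image _) ?_
    rintro _ ⟨z, hz, rfl⟩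
    obtain ⟨i, hi⟩ := Finite.exists_max (mixU uf z)
    refine le_trans (csInf_le (Set.toFinite _).bddBelow ⟨i, ?_, rfl⟩) (hmax z hz i hi)
    have : (⨆ k', mixU uf z k') ≤ mixU uf z i := ciSup_le hi
    show _ - δ < _
    linarith
  set t := δ / indGap uf with ht
  have ht0 : 0 < t := div_pos hδ hΔ
  have ht1 : t < 1 := (div_lt_one hΔ).2 hδΔ
  have htΔ : t * indGap uf = δ := div_mul_cancel₀ δ hΔ.ne'
  have hgap : ∀ k, k ≠ j →
      mixU uf ((1 - t) • x + t • y) k + δ ≤ mixU uf ((1 - t) • x + t • y) j := by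
    intro k hk
    rw [mixU_comb_aux, mixU_comb_aux]
    have h1 := mul_le_mul_of_nonneg_left (hj k) (sub_nonneg.2 ht1.le)
    have h2 := mul_le_mul_of_nonneg_left (hyj k hk) ht0.le
    rw [htΔ] at h2
    linarith
  have hBR : BRd uf δ ((1 - t) • x + t • y) = {j} := by
    ext k
    simp only [BRd, Set.mem_setOf_eq, Set.mem_singleton_iff]
    constructor
    · intro h
      by_contra hk
      have := hgap k hk
      have := hsup ((1 - t) • x + t • y) j
      linarith
    · rintro rfl
      have : (⨆ k', mixU uf ((1 - t) • x + t • y) k') ≤ mixU uf ((1 - t) • x + t • y) k := by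
        refine ciSup_le fun k' => ?_
        by_cases h : k' = k
        · rw [h]
        · have := hgap k' h
          linarith
      linarith
  have hval : valBR ul uf δ ((1 - t) • x + t • y) = (1 - t) * mixU ul x j + t * mixU ul y j := by
    rw [valBR, hBR, Set.image_singleton, csInf_singleton, mixU_comb_aux]
  have h0 := mul_nonneg ht0.le (mixU_nonneg_aux ul hul y hy j)
  refine ⟨(1 - t) • x + t • y,
    (convex_stdSimplex ℝ (Fin m)) hx hy (by linarith) ht0.le (by ring), ?_, ?_⟩
  · rw [hval]
    have := mul_le_mul_of_nonneg_left hSSE (sub_nonneg.2 ht1.le)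
    linarith
  · rw [hval]
    have := mul_le_mul_of_nonneg_left (mixU_le_one_aux ul hul x hx j) ht0.le
    linarith
end
end

section
/- Let (u_l, u_f) be a finite Stackelberg game with m = 2 leader actions, n ≥ 2 follower actions, utilities in [0,1], and inducibility gap Δ > 0. Then the function δ ↦ u_RSE(δ) is convex on the interval (0, Δ). -/
open Finset Set

noncomputable section

lemma core_right {n : ℕ} (a s : Fin n → ℝ) (D : ℝ) (hD : 0 < D)
    (hx : ∀ j, ∃ x : ℝ, 0 ≤ x ∧ x ≤ 1 ∧ ∀ k, k ≠ j → a k + s k * x + D ≤ a j + s j * x)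
    (j : Fin n) :
    ∃ u v : ℝ, ∀ δ, 0 < δ → δ ≤ D →
      (0 ≤ u + v * δ ∧ u + v * δ ≤ 1) ∧
      (∀ k, k ≠ j → a k + s k * (u + v * δ) + δ ≤ a j + s j * (u + v * δ)) ∧
      (∀ t : ℝ, t ≤ 1 → (∀ k, k ≠ j → a k + s k * t + δ ≤ a j + s j * t) → t ≤ u + v * δ) := by
  obtain ⟨x, hx0, hx1, hxj⟩ := hx j
  by_cases hmax : ∀ k, s k ≤ s j
  · refine ⟨1, 0, fun δ h0 hδ => ⟨by constructor <;> linarith, fun k hk => ?_, fun t ht _ => by linarith⟩⟩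
    have h1 := hxj k hk
    nlinarith [mul_nonneg (sub_nonneg.2 (hmax k)) (sub_nonneg.2 hx1)]
  · push Not at hmax
    obtain ⟨k0, hk0⟩ := hmax
    obtain ⟨k, hk, hmin⟩ := (Finset.univ.filter (fun k => s j < s k)).exists_min_image s
      ⟨k0, by simp [hk0]⟩
    have hjk : s j < s k := by simpa using hk
    have hkj : k ≠ j := by rintro rfl; exact lt_irrefl _ hjk
    obtain ⟨y, hy0, hy1, hyk⟩ := hx k
    have hs : 0 < s k - s j := by linarith
    refine ⟨(a j - a k) / (s k - s j), - 1 / (s k - s j), fun δ h0 hδ => ?_⟩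
    set d := (a j - a k) / (s k - s j) + - 1 / (s k - s j) * δ with hd
    have hdeq : (s k - s j) * d = a j - a k - δ := by
      rw [hd]; field_simp; ring
    have hxd : x ≤ d := by
      have := hxj k hkj
      by_contra hc
      push Not at hc
      nlinarith [mul_pos hs (sub_pos.2 hc)]
    have hdy : d ≤ y := by
      have := hyk j hkj.symm
      by_contra hc
      push Not at hc
      nlinarith [mul_pos hs (sub_pos.2 hc)]
    refine ⟨⟨by linarith, by linarith⟩, fun i hi => ?_, fun t ht hh => ?_⟩
    · rcases le_or_gt (s i) (s j) with h | h
      · have := hxj i hi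
        nlinarith [mul_nonneg (sub_nonneg.2 h) (sub_nonneg.2 hxd)]
      · have h2 : s k ≤ s i := hmin i (by simp [h])
        by_cases hik : i = k
        · subst hik; linarith
        · have := hyk i hik
          nlinarith [mul_nonneg (sub_nonneg.2 h2) (sub_nonneg.2 hdy)]
    · have := hh k hkj
      by_contra hc
      push Not at hc
      nlinarith [mul_pos hs (sub_pos.2 hc)]

lemma core_left {n : ℕ} (a s : Fin n → ℝ) (D : ℝ) (hD : 0 < D)
    (hx : ∀ j, ∃ x : ℝ, 0 ≤ x ∧ x ≤ 1 ∧ ∀ k, k ≠ j → a k + s k * x + D ≤ a j + s j * x)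
    (j : Fin n) :
    ∃ u v : ℝ, ∀ δ, 0 < δ → δ ≤ D →
      (0 ≤ u + v * δ ∧ u + v * δ ≤ 1) ∧
      (∀ k, k ≠ j → a k + s k * (u + v * δ) + δ ≤ a j + s j * (u + v * δ)) ∧
      (∀ t : ℝ, 0 ≤ t → (∀ k, k ≠ j → a k + s k * t + δ ≤ a j + s j * t) → u + v * δ ≤ t) := by
  obtain ⟨u, v, h⟩ := core_right (fun i => a i + s i) (fun i => - s i) D hD (fun j => by
    obtain ⟨x, h0, h1, h⟩ := hx j
    exact ⟨1 - x, by linarith, by linarith, fun k hk => by nlinarith [h k hk]⟩) j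
  refine ⟨1 - u, - v, fun δ h0 hδ => ?_⟩
  obtain ⟨⟨h1, h2⟩, h3, h4⟩ := h δ h0 hδ
  refine ⟨⟨by linarith, by linarith⟩, fun k hk => by nlinarith [h3 k hk], fun t ht hh => ?_⟩
  have := h4 (1 - t) (by linarith) (fun k hk => by nlinarith [hh k hk])
  linarith

/-- Abstract form: every value at `(δ₀, t₀)` is below an affine minorant of `U`. -/
lemma core_main {n : ℕ} [Nonempty (Fin n)] (a s b l : Fin n → ℝ) (D : ℝ) (hD : 0 < D)
    (hx : ∀ j, ∃ x : ℝ, 0 ≤ x ∧ x ≤ 1 ∧ ∀ k, k ≠ j → a k + s k * x + D ≤ a j + s j * x)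
    (U : ℝ → ℝ)
    (hU : ∀ δ t c, 0 < δ → 0 ≤ t → t ≤ 1 →
      (∀ i, (∀ k, a k + s k * t < a i + s i * t + δ) → c ≤ b i + l i * t) → c ≤ U δ)
    (δ₀ t₀ c : ℝ) (hδ0 : 0 < δ₀) (hδD : δ₀ ≤ D) (ht0 : 0 ≤ t₀) (ht1 : t₀ ≤ 1)
    (hc : ∀ i, (∀ k, a k + s k * t₀ < a i + s i * t₀ + δ₀) → c ≤ b i + l i * t₀) :
    ∃ A B : ℝ, c ≤ A + B * δ₀ ∧ ∀ δ, 0 < δ → δ ≤ D → A + B * δ ≤ U δ := by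
  choose ur vr hr using core_right a s D hD hx
  choose uu vv hl using core_left a s D hD hx
  -- only-j points give bounds
  have honly : ∀ j δ t, 0 < δ → 0 ≤ t → t ≤ 1 →
      (∀ k, k ≠ j → a k + s k * t + δ ≤ a j + s j * t) → b j + l j * t ≤ U δ := by
    intro j δ t h0 ht ht' h
    refine hU δ t _ h0 ht ht' fun i hi => ?_
    by_cases hij : i = j
    · rw [hij]
    · have := h i hij
      have := hi j
      linarith
  have hRb : ∀ j δ, 0 < δ → δ ≤ D → b j + l j * (ur j + vr j * δ) ≤ U δ := by
    intro j δ h0 h1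
    obtain ⟨⟨h2, h3⟩, h4, _⟩ := hr j δ h0 h1
    exact honly j δ _ h0 h2 h3 h4
  have hLb : ∀ j δ, 0 < δ → δ ≤ D → b j + l j * (uu j + vv j * δ) ≤ U δ := by
    intro j δ h0 h1
    obtain ⟨⟨h2, h3⟩, h4, _⟩ := hl j δ h0 h1
    exact honly j δ _ h0 h2 h3 h4
  have finR : ∀ j, c ≤ b j + l j * (ur j + vr j * δ₀) →
      ∃ A B : ℝ, c ≤ A + B * δ₀ ∧ ∀ δ, 0 < δ → δ ≤ D → A + B * δ ≤ U δ := fun j hj =>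
    ⟨b j + l j * ur j, l j * vr j, by linarith, fun δ h0 h1 => by linarith [hRb j δ h0 h1]⟩
  have finL : ∀ j, c ≤ b j + l j * (uu j + vv j * δ₀) →
      ∃ A B : ℝ, c ≤ A + B * δ₀ ∧ ∀ δ, 0 < δ → δ ≤ D → A + B * δ ≤ U δ := fun j hj =>
    ⟨b j + l j * uu j, l j * vv j, by linarith, fun δ h0 h1 => by linarith [hLb j δ h0 h1]⟩
  -- the maximiser
  obtain ⟨m, -, hm⟩ := (Finset.univ : Finset (Fin n)).exists_max_image
    (fun i => a i + s i * t₀) Finset.univ_nonempty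
  have hm' : ∀ k, a k + s k * t₀ < a m + s m * t₀ + δ₀ := fun k => by
    have := hm k (Finset.mem_univ k)
    linarith
  by_cases hsing : ∀ i, (∀ k, a k + s k * t₀ < a i + s i * t₀ + δ₀) → i = m
  · have hon : ∀ k, k ≠ m → a k + s k * t₀ + δ₀ ≤ a m + s m * t₀ := by
      intro k hk
      by_contra hcon
      push Not at hcon
      refine hk (hsing k fun k' => ?_)
      have := hm k' (Finset.mem_univ k')
      linarith
    have hcm := hc m hm'
    rcases le_total 0 (l m) with h | h
    · refine finR m (hcm.trans ?_)
      have := (hr m δ₀ hδ0 hδD).2.2 t₀ ht1 hon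
      nlinarith [mul_le_mul_of_nonneg_left this h]
    · refine finL m (hcm.trans ?_)
      have := (hl m δ₀ hδ0 hδD).2.2 t₀ ht0 hon
      nlinarith [mul_le_mul_of_nonpos_left this h]
  · push Not at hsing
    obtain ⟨i, hi, him⟩ := hsing
    have hsd : ∀ p q, p ≠ q → s p ≠ s q := by
      intro p q hpq he
      obtain ⟨x, _, _, hxp⟩ := hx p
      obtain ⟨y, _, _, hyq⟩ := hx q
      have h1 := hxp q hpq.symm
      have h2 := hyq p hpq
      rw [he] at h1 h2
      linarith
    obtain ⟨j, k, hj, hk, hjk⟩ : ∃ j k, (∀ p, a p + s p * t₀ < a j + s j * t₀ + δ₀) ∧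
        (∀ p, a p + s p * t₀ < a k + s k * t₀ + δ₀) ∧ s j < s k := by
      rcases lt_or_gt_of_ne (hsd i m him) with h | h
      · exact ⟨i, m, hi, hm', h⟩
      · exact ⟨m, i, hm', hi, h⟩
    have hjk' : j ≠ k := by rintro rfl; exact lt_irrefl _ hjk
    have hcj := hc j hj
    have hck := hc k hk
    have hbet : ∀ i, s j < s i → s i < s k → False := by
      intro i h1 h2
      obtain ⟨x, hx0, hx1, hxi⟩ := hx i
      have e1 := hxi j (by rintro rfl; exact lt_irrefl _ h1)
      have e2 := hxi k (by rintro rfl; exact lt_irrefl _ h2)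
      have e3 := hj i
      have e4 := hk i
      rcases le_total x t₀ with h | h
      · nlinarith [mul_nonneg (sub_nonneg.2 h1.le) (sub_nonneg.2 h)]
      · nlinarith [mul_nonneg (sub_nonneg.2 h2.le) (sub_nonneg.2 h)]
    rcases le_or_gt (l j) 0 with hlj | hlj
    · refine finR j (hcj.trans ?_)
      have h4 := (hr j δ₀ hδ0 hδD).2.1 k hjk'.symm
      have : ur j + vr j * δ₀ ≤ t₀ := by
        by_contra hcon
        push Not at hcon
        have := hk j
        nlinarith [mul_pos (sub_pos.2 hjk) (sub_pos.2 hcon)]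
      nlinarith [mul_le_mul_of_nonpos_left this hlj]
    rcases le_or_gt 0 (l k) with hlk | hlk
    · refine finL k (hck.trans ?_)
      have h4 := (hl k δ₀ hδ0 hδD).2.1 j hjk'
      have : t₀ ≤ uu k + vv k * δ₀ := by
        by_contra hcon
        push Not at hcon
        have := hj k
        nlinarith [mul_pos (sub_pos.2 hjk) (sub_pos.2 hcon)]
      nlinarith [mul_le_mul_of_nonneg_left this hlk]
    · have hpos : 0 < l j - l k := by linarith
      obtain ⟨q, hq⟩ : ∃ q : ℝ, b j + l j * q = b k + l k * q :=
        ⟨(b k - b j) / (l j - l k), by field_simp; ring⟩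
      refine ⟨b j + l j * q, 0, ?_, fun δ h0 h1 => ?_⟩
      · rcases le_total t₀ q with h | h
        · nlinarith [mul_le_mul_of_nonneg_left h hlj.le]
        · nlinarith [mul_le_mul_of_nonpos_left h hlk.le]
      · rw [zero_mul, add_zero]
        rcases le_or_gt q (ur j + vr j * δ) with h | hq1
        · refine le_trans ?_ (hRb j δ h0 h1)
          nlinarith [mul_le_mul_of_nonneg_left h hlj.le]
        rcases le_or_gt (uu k + vv k * δ) q with h | hq2
        · refine le_trans ?_ (hLb k δ h0 h1)
          nlinarith [mul_le_mul_of_nonpos_left h hlk.le]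
        obtain ⟨⟨r1, r2⟩, r3, -⟩ := hr j δ h0 h1
        obtain ⟨⟨l1, l2⟩, l3, -⟩ := hl k δ h0 h1
        refine hU δ q _ h0 (by linarith) (by linarith) fun i hi => ?_
        by_cases hij : i = j
        · rw [hij]
        by_cases hik : i = k
        · rw [hik, hq]
        exfalso
        rcases lt_or_gt_of_ne (hsd i j hij) with h | h
        · have := r3 i hij
          have := hi j
          nlinarith [mul_pos (sub_pos.2 h) (sub_pos.2 hq1)]
        rcases lt_or_gt_of_ne (hsd i k hik) with h' | h'
        · exact hbet i h h'
        · have := l3 i hik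
          have := hi k
          nlinarith [mul_pos (sub_pos.2 h') (sub_pos.2 hq2)]

lemma mixU_two {n : ℕ} (u : Fin 2 → Fin n → ℝ) (x : Fin 2 → ℝ) (hx : x ∈ simplex 2) (j : Fin n) :
    mixU u x j = u 0 j + (u 1 j - u 0 j) * x 1 := by
  have h := hx.2
  rw [Fin.sum_univ_two] at h
  rw [mixU, Fin.sum_univ_two, show x 0 = 1 - x 1 by linarith]
  ring

lemma simplex_two_bounds (x : Fin 2 → ℝ) (hx : x ∈ simplex 2) : 0 ≤ x 1 ∧ x 1 ≤ 1 := by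
  have h := hx.2
  rw [Fin.sum_univ_two] at h
  have h0 := hx.1 0
  have h1 := hx.1 1
  exact ⟨h1, by linarith⟩

lemma simplex_two_mk (t : ℝ) (h0 : 0 ≤ t) (h1 : t ≤ 1) : (![1 - t, t] : Fin 2 → ℝ) ∈ simplex 2 := by
  refine ⟨fun i => ?_, ?_⟩
  · fin_cases i
    · simpa using h1
    · simpa using h0
  · rw [Fin.sum_univ_two]; simp

lemma mem_BRd_iff {m n : ℕ} [Nonempty (Fin n)] (uf : Fin m → Fin n → ℝ) (δ : ℝ) (x : Fin m → ℝ)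
    (j : Fin n) : j ∈ BRd uf δ x ↔ ∀ k, mixU uf x k < mixU uf x j + δ := by
  have hb : BddAbove (Set.range fun j' => mixU uf x j') := (Set.finite_range _).bddAbove
  change mixU uf x j > (⨆ j', mixU uf x j') - δ ↔ _
  constructor
  · intro h k
    have := le_ciSup hb k
    linarith
  · intro h
    obtain ⟨k, hk⟩ := exists_eq_ciSup_of_finite (f := fun j' => mixU uf x j')
    have := h k
    rw [← hk]
    linarith

lemma BRd_nonempty {m n : ℕ} [Nonempty (Fin n)] (uf : Fin m → Fin n → ℝ) (δ : ℝ) (hδ : 0 < δ)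
    (x : Fin m → ℝ) : (BRd uf δ x).Nonempty := by
  obtain ⟨k, hk⟩ := exists_eq_ciSup_of_finite (f := fun j' => mixU uf x j')
  refine ⟨k, ?_⟩
  change mixU uf x k > (⨆ j', mixU uf x j') - δ
  rw [← hk]
  linarith

lemma valBR_le {m n : ℕ} (ul uf : Fin m → Fin n → ℝ) (δ : ℝ) (x : Fin m → ℝ) (j : Fin n)
    (hj : j ∈ BRd uf δ x) : valBR ul uf δ x ≤ mixU ul x j :=
  csInf_le ((Set.toFinite _).bddBelow) ⟨j, hj, rfl⟩

/-- when `m = 2`, `u_RSE` is convex on `(0, Δ)`. -/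
theorem uRSE_convex_of_two_actions (n : ℕ) (hn : 2 ≤ n) (ul uf : Fin 2 → Fin n → ℝ)
    (hul : ∀ i j, ul i j ∈ Set.Icc (0:ℝ) 1) (huf : ∀ i j, uf i j ∈ Set.Icc (0:ℝ) 1)
    (hΔ : 0 < indGap uf) :
    ConvexOn ℝ (Set.Ioo 0 (indGap uf)) (uRSE ul uf) := by
  have : Nonempty (Fin n) := ⟨⟨0, by omega⟩⟩
  refine ⟨convex_Ioo _ _, ?_⟩
  intro d1 hd1 d2 hd2 p q hp hq hpq
  simp only [smul_eq_mul]
  set D := max d1 d2 with hDdef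
  have hD0 : 0 < D := lt_max_of_lt_left hd1.1
  have hDg : D < indGap uf := max_lt hd1.2 hd2.2
  have hd1D : d1 ≤ D := le_max_left _ _
  have hd2D : d2 ≤ D := le_max_right _ _
  have hsne : (simplex 2).Nonempty := ⟨_, simplex_two_mk 0 le_rfl zero_le_one⟩
  have hx : ∀ j, ∃ x : ℝ, 0 ≤ x ∧ x ≤ 1 ∧ ∀ k, k ≠ j →
      uf 0 k + (uf 1 k - uf 0 k) * x + D ≤ uf 0 j + (uf 1 j - uf 0 j) * x := by
    intro j
    have h1 := hDg.trans_le (ciInf_le (Set.finite_range _).bddBelow j)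
    obtain ⟨_, ⟨x, hxs, rfl⟩, hlt⟩ := exists_lt_of_lt_csSup (hsne.image _) h1
    refine ⟨x 1, (simplex_two_bounds x hxs).1, (simplex_two_bounds x hxs).2, fun k hk => ?_⟩
    have h2 := hlt.trans_le (ciInf_le (Set.finite_range _).bddBelow (⟨k, hk⟩ : {k : Fin n // k ≠ j}))
    simp only [mixU_two uf x hxs] at h2
    linarith
  have hU : ∀ δ t c, 0 < δ → 0 ≤ t → t ≤ 1 →
      (∀ i, (∀ k, uf 0 k + (uf 1 k - uf 0 k) * t < uf 0 i + (uf 1 i - uf 0 i) * t + δ) →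
        c ≤ ul 0 i + (ul 1 i - ul 0 i) * t) → c ≤ uRSE ul uf δ := by
    intro δ t c hδ ht0 ht1 h
    have hxs := simplex_two_mk t ht0 ht1
    have hbdd : BddAbove (valBR ul uf δ '' simplex 2) := by
      refine ⟨1, ?_⟩
      rintro _ ⟨x, hxs, rfl⟩
      obtain ⟨j, hj⟩ := BRd_nonempty uf δ hδ x
      refine (valBR_le ul uf δ x j hj).trans ?_
      rw [mixU_two ul x hxs]
      obtain ⟨h0, h1⟩ := simplex_two_bounds x hxs
      nlinarith [(hul 0 j).2, (hul 1 j).2]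
    refine le_trans ?_ (le_csSup hbdd ⟨_, hxs, rfl⟩)
    refine le_csInf ((BRd_nonempty uf δ hδ _).image _) ?_
    rintro _ ⟨j, hj, rfl⟩
    rw [mem_BRd_iff] at hj
    simp only [mixU_two uf _ hxs] at hj
    rw [mixU_two ul _ hxs]
    simpa using h j (by simpa using hj)
  have hδ0 : 0 < p * d1 + q * d2 := (convex_Ioo 0 (indGap uf) hd1 hd2 hp hq hpq).1
  have hδD : p * d1 + q * d2 ≤ D := by
    have e : D = p * D + q * D := by rw [← add_mul, hpq, one_mul]
    rw [e]
    exact add_le_add (mul_le_mul_of_nonneg_left hd1D hp) (mul_le_mul_of_nonneg_left hd2D hq)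
  refine csSup_le (hsne.image _) ?_
  rintro _ ⟨x, hxs, rfl⟩
  obtain ⟨h0, h1⟩ := simplex_two_bounds x hxs
  obtain ⟨A, B, hc, hAB⟩ := core_main (fun j => uf 0 j) (fun j => uf 1 j - uf 0 j)
    (fun j => ul 0 j) (fun j => ul 1 j - ul 0 j) D hD0 hx (uRSE ul uf) hU
    (p * d1 + q * d2) (x 1) (valBR ul uf (p * d1 + q * d2) x) hδ0 hδD h0 h1 (by
      intro i hi
      have := valBR_le ul uf (p * d1 + q * d2) x i (by
        rw [mem_BRd_iff]
        simp only [mixU_two uf x hxs]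
        exact hi)
      rwa [mixU_two ul x hxs] at this)
  refine hc.trans ?_
  have e1 := mul_le_mul_of_nonneg_left (hAB d1 hd1.1 hd1D) hp
  have e2 := mul_le_mul_of_nonneg_left (hAB d2 hd2.1 hd2D) hq
  have e3 : A = p * A + q * A := by rw [← add_mul, hpq, one_mul]
  linarith
end
end

section
/- There exists a finite Stackelberg game (u_l, u_f) with m = 3 leader actions, n = 2 follower actions, utilities in [0,1], and inducibility gap Δ > 0, such that the function δ ↦ u_RSE(δ) restricted to the interval (0, Δ) is neither convex nor concave. -/
open Finset Set

noncomputable section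

/-- Leader utilities of the example. -/
def exL : Fin 3 → Fin 2 → ℝ := ![![0, 1/2], ![1, 1/2], ![0, 1/2]]

/-- Follower utilities of the example. -/
def exF : Fin 3 → Fin 2 → ℝ := ![![1, 0], ![1/2, 0], ![0, 1]]

lemma exL0 (x : Fin 3 → ℝ) : mixU exL x 0 = x 1 := by
  simp [mixU, exL, Fin.sum_univ_three]

lemma exL1 (x : Fin 3 → ℝ) : mixU exL x 1 = (x 0 + x 1 + x 2) / 2 := by
  simp [mixU, exL, Fin.sum_univ_three]; ring

lemma exF0 (x : Fin 3 → ℝ) : mixU exF x 0 = x 0 + x 1 / 2 := by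
  simp [mixU, exF, Fin.sum_univ_three]; ring

lemma exF1 (x : Fin 3 → ℝ) : mixU exF x 1 = x 2 := by
  simp [mixU, exF, Fin.sum_univ_three]

lemma sup2 (f : Fin 2 → ℝ) : (⨆ j, f j) = max (f 0) (f 1) := by
  apply le_antisymm
  · apply ciSup_le
    intro j
    fin_cases j <;> simp
  · exact max_le (le_ciSup (Set.finite_range f).bddAbove 0)
      (le_ciSup (Set.finite_range f).bddAbove 1)

lemma exMem (x : Fin 3 → ℝ) (hx : x ∈ simplex 3) :
    0 ≤ x 0 ∧ 0 ≤ x 1 ∧ 0 ≤ x 2 ∧ x 0 + x 1 + x 2 = 1 := by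
  obtain ⟨h, hs⟩ := hx
  rw [Fin.sum_univ_three] at hs
  exact ⟨h 0, h 1, h 2, hs⟩

lemma mem_ex (a b c : ℝ) (ha : 0 ≤ a) (hb : 0 ≤ b) (hc : 0 ≤ c) (h : a + b + c = 1) :
    ![a, b, c] ∈ simplex 3 := by
  refine ⟨?_, ?_⟩
  · intro i
    fin_cases i <;> simpa
  · simpa [Fin.sum_univ_three] using h

lemma val_le (δ : ℝ) (x : Fin 3 → ℝ) (j : Fin 2) (hj : j ∈ BRd exF δ x) :
    valBR exL exF δ x ≤ mixU exL x j :=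
  csInf_le ((Set.toFinite _).bddBelow) ⟨j, hj, rfl⟩

lemma mem0 (δ : ℝ) (x : Fin 3 → ℝ) :
    0 ∈ BRd exF δ x ↔ x 0 + x 1 / 2 > max (x 0 + x 1 / 2) (x 2) - δ := by
  simp only [BRd, Set.mem_ofPred_eq, sup2, exF0, exF1]

lemma mem1 (δ : ℝ) (x : Fin 3 → ℝ) :
    1 ∈ BRd exF δ x ↔ x 2 > max (x 0 + x 1 / 2) (x 2) - δ := by
  simp only [BRd, Set.mem_ofPred_eq, sup2, exF0, exF1]

/-- Upper bound on the value at a point, for either case. -/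
lemma val_cases (δ : ℝ) (hδ : 0 < δ) (x : Fin 3 → ℝ) (hx : x ∈ simplex 3) :
    valBR exL exF δ x ≤ 1 / 2 ∨
      (x 0 + x 1 / 2 - x 2 ≥ δ ∧ valBR exL exF δ x ≤ x 1) := by
  obtain ⟨h0, h1, h2, hs⟩ := exMem x hx
  by_cases h : 1 ∈ BRd exF δ x
  · left
    have := val_le δ x 1 h
    rw [exL1, hs] at this
    exact this
  · right
    rw [mem1, gt_iff_lt, not_lt] at h
    rcases le_total (x 0 + x 1 / 2) (x 2) with hm | hm
    · rw [max_eq_right hm] at h; linarith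
    · rw [max_eq_left hm] at h
      refine ⟨by linarith, ?_⟩
      have := val_le δ x 0 ((mem0 δ x).2 (by rw [max_eq_left hm]; linarith))
      rwa [exL0] at this

lemma simplex_ne : (simplex 3).Nonempty :=
  ⟨![1, 0, 0], mem_ex _ _ _ (by norm_num) (by norm_num) (by norm_num) (by norm_num)⟩

lemma val_le_one (δ : ℝ) (hδ : 0 < δ) (x : Fin 3 → ℝ) (hx : x ∈ simplex 3) :
    valBR exL exF δ x ≤ 1 := by
  obtain ⟨h0, h1, h2, hs⟩ := exMem x hx
  rcases val_cases δ hδ x hx with h | ⟨_, h⟩ <;> linarith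

lemma uRSE_le_one (δ : ℝ) (hδ : 0 < δ) : uRSE exL exF δ ≤ 1 := by
  apply csSup_le (simplex_ne.image _)
  rintro _ ⟨x, hx, rfl⟩
  exact val_le_one δ hδ x hx

lemma uRSE_le_half : uRSE exL exF (3/4) ≤ 1/2 := by
  apply csSup_le (simplex_ne.image _)
  rintro _ ⟨x, hx, rfl⟩
  obtain ⟨h0, h1, h2, hs⟩ := exMem x hx
  rcases val_cases (3/4) (by norm_num) x hx with h | ⟨h', h⟩ <;> linarith

lemma le_uRSE (δ : ℝ) (hδ : 0 < δ) (x : Fin 3 → ℝ) (hx : x ∈ simplex 3) (c : ℝ)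
    (hne : (BRd exF δ x).Nonempty) (h : ∀ j ∈ BRd exF δ x, c ≤ mixU exL x j) :
    c ≤ uRSE exL exF δ := by
  have h1 : c ≤ valBR exL exF δ x := by
    apply le_csInf (hne.image _)
    rintro _ ⟨j, hj, rfl⟩
    exact h j hj
  refine h1.trans (le_csSup ⟨1, ?_⟩ ⟨x, hx, rfl⟩)
  rintro _ ⟨y, hy, rfl⟩
  exact val_le_one δ hδ y hy

/-- Lower bound from a point where action 0 beats action 1 by at least `δ`. -/
lemma le_uRSE0 (δ : ℝ) (hδ : 0 < δ) (x : Fin 3 → ℝ) (hx : x ∈ simplex 3)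
    (h : δ ≤ x 0 + x 1 / 2 - x 2) : x 1 ≤ uRSE exL exF δ := by
  have hm : x 2 ≤ x 0 + x 1 / 2 := by linarith
  refine le_uRSE δ hδ x hx _ ⟨0, (mem0 δ x).2 (by rw [max_eq_left hm]; linarith)⟩ ?_
  rw [Fin.forall_fin_two]
  refine ⟨fun _ => (exL0 x).ge, fun h1 => ?_⟩
  rw [mem1, max_eq_left hm] at h1
  linarith

lemma half_le_uRSE (δ : ℝ) (hδ : 0 < δ) (hδ1 : δ < 1) : 1/2 ≤ uRSE exL exF δ := by
  have hx : ![(0:ℝ), 0, 1] ∈ simplex 3 :=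
    mem_ex _ _ _ (by norm_num) (by norm_num) (by norm_num) (by norm_num)
  refine le_uRSE δ hδ _ hx _ ⟨1, (mem1 δ _).2 (by simpa using hδ)⟩ ?_
  rw [Fin.forall_fin_two]
  refine ⟨fun h0 => ?_, fun _ => ?_⟩
  · rw [mem0] at h0
    simp at h0
    linarith
  · rw [exL1]; simp

lemma gap_ge (j k : Fin 2) (hk : k ≠ j) (x : Fin 3 → ℝ) (hx : x ∈ simplex 3)
    (h : 1 ≤ mixU exF x j - mixU exF x k) :
    1 ≤ sSup ((fun x => ⨅ j' : {k : Fin 2 // k ≠ j}, (mixU exF x j - mixU exF x j'.1))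
      '' simplex 3) := by
  haveI : Nonempty {k : Fin 2 // k ≠ j} := ⟨⟨k, hk⟩⟩
  have h1 : 1 ≤ ⨅ j' : {k : Fin 2 // k ≠ j}, (mixU exF x j - mixU exF x j'.1) := by
    apply le_ciInf
    rintro ⟨l, hl⟩
    have : l = k := by omega
    subst this
    exact h
  refine h1.trans (le_csSup ⟨1, ?_⟩ ⟨x, hx, rfl⟩)
  rintro _ ⟨y, hy, rfl⟩
  refine (ciInf_le (Set.finite_range _).bddBelow ⟨k, hk⟩).trans ?_
  obtain ⟨h0, h1, h2, hs⟩ := exMem y hy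
  have b : ∀ i, 0 ≤ mixU exF y i ∧ mixU exF y i ≤ 1 := by
    rw [Fin.forall_fin_two, exF0, exF1]
    refine ⟨⟨?_, ?_⟩, ?_, ?_⟩ <;> linarith
  have := b j
  have := b k
  simp only
  linarith

lemma one_le_gap : 1 ≤ indGap exF := by
  apply le_ciInf
  rw [Fin.forall_fin_two]
  constructor
  · refine gap_ge 0 1 (by decide) ![1, 0, 0]
      (mem_ex _ _ _ (by norm_num) (by norm_num) (by norm_num) (by norm_num)) ?_
    rw [exF0, exF1]; simp
  · refine gap_ge 1 0 (by decide) ![0, 0, 1]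
      (mem_ex _ _ _ (by norm_num) (by norm_num) (by norm_num) (by norm_num)) ?_
    rw [exF0, exF1]; simp

/-- for `m = 3` there is a game where `u_RSE` is neither convex nor
concave on `(0, Δ)`. -/
theorem uRSE_not_convex_not_concave :
    ∃ (ul uf : Fin 3 → Fin 2 → ℝ),
      (∀ i j, ul i j ∈ Set.Icc (0:ℝ) 1) ∧ (∀ i j, uf i j ∈ Set.Icc (0:ℝ) 1) ∧
      0 < indGap uf ∧
      ¬ ConvexOn ℝ (Set.Ioo 0 (indGap uf)) (uRSE ul uf) ∧
      ¬ ConcaveOn ℝ (Set.Ioo 0 (indGap uf)) (uRSE ul uf) := by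
  have hg := one_le_gap
  have hmem : ∀ δ : ℝ, 0 < δ → δ < 1 → δ ∈ Set.Ioo 0 (indGap exF) :=
    fun δ h h' => ⟨h, h'.trans_le hg⟩
  refine ⟨exL, exF, ?_, ?_, by linarith, ?_, ?_⟩
  · intro i j
    fin_cases i <;> fin_cases j <;> norm_num [exL]
  · intro i j
    fin_cases i <;> fin_cases j <;> norm_num [exF]
  · intro h
    have h1 := h.2 (hmem (1/4) (by norm_num) (by norm_num))
      (hmem (3/4) (by norm_num) (by norm_num))
      (show (0:ℝ) ≤ 1/2 by norm_num) (show (0:ℝ) ≤ 1/2 by norm_num) (by norm_num)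
    simp only [smul_eq_mul] at h1
    rw [show (1/2 * (1/4) + 1/2 * (3/4) : ℝ) = 1/2 by norm_num] at h1
    have h2 := uRSE_le_one (1/4) (by norm_num)
    have h3 := uRSE_le_half
    have h4 := le_uRSE0 (1/2) (by norm_num) ![0, 1, 0]
      (mem_ex _ _ _ (by norm_num) (by norm_num) (by norm_num) (by norm_num)) (by simp)
    simp only [Matrix.cons_val] at h4
    linarith
  · intro h
    have h1 := h.2 (hmem (5/8) (by norm_num) (by norm_num))
      (hmem (7/8) (by norm_num) (by norm_num))
      (show (0:ℝ) ≤ 1/2 by norm_num) (show (0:ℝ) ≤ 1/2 by norm_num) (by norm_num)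
    simp only [smul_eq_mul] at h1
    rw [show (1/2 * (5/8) + 1/2 * (7/8) : ℝ) = 3/4 by norm_num] at h1
    have h2 := half_le_uRSE (7/8) (by norm_num) (by norm_num)
    have h3 := uRSE_le_half
    have h4 := le_uRSE0 (5/8) (by norm_num) ![1/4, 3/4, 0]
      (mem_ex _ _ _ (by norm_num) (by norm_num) (by norm_num) (by norm_num))
      (by simp only [Matrix.cons_val]; norm_num)
    simp only [Matrix.cons_val] at h4
    linarith
end
end

section
/- There exist a finite Stackelberg game (u_l, u_f) (with m = 3 leader actions, n = 2 follower actions, and real-valued utilities) and a δ > 0 such that, under the alternative δ-optimal response set defined with a non-strict inequality, BR≥_δ(x) = {j ∈ [n] : u_f(x, j) ≥ max_{j' ∈ [n]} u_f(x, j') − δ}, the supremum sup_{x ∈ Δ^m} min_{j ∈ BR≥_δ(x)} u_l(x, j) is NOT attained by any leader strategy x ∈ Δ^m. Hence the δ-RSE may fail to exist if the δ-optimal response set is defined with '≥' instead of '>'. -/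
open Finset Set

noncomputable section

/-- The alternative (closed) δ-optimal response set, defined with `≥`. -/
def BRge {m n : ℕ} (uf : Fin m → Fin n → ℝ) (δ : ℝ) (x : Fin m → ℝ) : Set (Fin n) :=
  {j | mixU uf x j ≥ (⨆ j', mixU uf x j') - δ}

/-- Worst-case leader utility over the closed δ-optimal response set. -/
def valBRge {m n : ℕ} (ul uf : Fin m → Fin n → ℝ) (δ : ℝ) (x : Fin m → ℝ) : ℝ :=
  sInf (mixU ul x '' BRge uf δ x)

/-- Leader utilities of the counterexample. -/
def exUl : Fin 3 → Fin 2 → ℝ := ![![2, 0], ![1, 0], ![1, 0]]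

/-- Follower utilities of the counterexample. -/
def exUf : Fin 3 → Fin 2 → ℝ := ![![0, 0], ![2, 0], ![2, 0]]

lemma exSum {x : Fin 3 → ℝ} (hx : x ∈ simplex 3) :
    0 ≤ x 0 ∧ 0 ≤ x 1 ∧ 0 ≤ x 2 ∧ x 0 + x 1 + x 2 = 1 := by
  obtain ⟨h, hs⟩ := hx
  rw [Fin.sum_univ_three] at hs
  exact ⟨h 0, h 1, h 2, hs⟩

lemma exUl0 {x : Fin 3 → ℝ} (hx : x ∈ simplex 3) : mixU exUl x 0 = 1 + x 0 := by
  have := exSum hx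
  simp [mixU, exUl, Fin.sum_univ_three]
  linarith

lemma exUl1 (x : Fin 3 → ℝ) : mixU exUl x 1 = 0 := by
  simp [mixU, exUl, Fin.sum_univ_three]

lemma exUf0 {x : Fin 3 → ℝ} (hx : x ∈ simplex 3) : mixU exUf x 0 = 2 * (1 - x 0) := by
  have := exSum hx
  simp [mixU, exUf, Fin.sum_univ_three]
  linarith

lemma exUf1 (x : Fin 3 → ℝ) : mixU exUf x 1 = 0 := by
  simp [mixU, exUf, Fin.sum_univ_three]

lemma exSup {x : Fin 3 → ℝ} (hx : x ∈ simplex 3) :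
    (⨆ j, mixU exUf x j) = 2 * (1 - x 0) := by
  have h := exSum hx
  apply le_antisymm
  · apply ciSup_le
    intro j
    fin_cases j
    · exact (exUf0 hx).le
    · refine (exUf1 x).le.trans ?_
      linarith
  · rw [← exUf0 hx]
    exact le_ciSup (Set.finite_range _).bddAbove 0

lemma exVal_lt {x : Fin 3 → ℝ} (hx : x ∈ simplex 3) (h : x 0 < 1 / 2) :
    valBRge exUl exUf 1 x = 1 + x 0 := by
  have hB : BRge exUf 1 x = {0} := by
    ext j
    simp only [BRge, Set.mem_setOf_eq, exSup hx, Set.mem_singleton_iff]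
    fin_cases j
    · simp [exUf0 hx]
    · simp [exUf1 x]
      linarith
  rw [valBRge, hB, Set.image_singleton, csInf_singleton, exUl0 hx]

lemma exVal_ge {x : Fin 3 → ℝ} (hx : x ∈ simplex 3) (h : 1 / 2 ≤ x 0) :
    valBRge exUl exUf 1 x ≤ 0 := by
  refine csInf_le ((Set.toFinite _).image _).bddBelow ⟨1, ?_, exUl1 x⟩
  simp only [BRge, Set.mem_setOf_eq, exSup hx, exUf1 x]
  linarith

lemma exVal_bound {x : Fin 3 → ℝ} (hx : x ∈ simplex 3) :
    valBRge exUl exUf 1 x < 3 / 2 := by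
  rcases lt_or_ge (x 0) (1 / 2) with h | h
  · rw [exVal_lt hx h]
    linarith
  · linarith [exVal_ge hx h]

/-- with the closed δ-optimal response set, the robust value may not
be attained: the δ-RSE can fail to exist. -/
theorem closed_br_rse_may_not_exist :
    ∃ (ul uf : Fin 3 → Fin 2 → ℝ) (δ : ℝ), 0 < δ ∧
      ¬ ∃ x ∈ simplex 3, valBRge ul uf δ x = sSup (valBRge ul uf δ '' simplex 3) := by
  refine ⟨exUl, exUf, 1, one_pos, ?_⟩
  rintro ⟨x, hx, he⟩
  have hb := exVal_bound hx
  obtain ⟨c, hc1, hc2⟩ := exists_between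
    (max_lt (show (0 : ℝ) < 1 / 2 by norm_num) (show valBRge exUl exUf 1 x - 1 < 1 / 2 by linarith))
  have hc0 := (le_max_left _ _).trans_lt hc1
  have hcv := (le_max_right _ _).trans_lt hc1
  have hy : (![c, 1 - c, 0] : Fin 3 → ℝ) ∈ simplex 3 := by
    refine ⟨fun i => ?_, ?_⟩
    · fin_cases i <;> simp <;> linarith
    · simp [Fin.sum_univ_three]
  have hv := exVal_lt hy (by simpa using hc2)
  have hle : valBRge exUl exUf 1 ![c, 1 - c, 0] ≤ sSup (valBRge exUl exUf 1 '' simplex 3) := by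
    refine le_csSup ⟨3 / 2, ?_⟩ ⟨_, hy, rfl⟩
    rintro _ ⟨z, hz, rfl⟩
    exact (exVal_bound hz).le
  rw [← he, hv] at hle
  simp at hle
  linarith
end
end
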